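/- Let q = p^m ≡ 5 (mod 8) be a prime power with primitive element α of F_q, and let q = s² + t² be the Katre–Rajwade-normalized representation. Then E = C_0^4 ∪ C_1^4 satisfies Δ(E) = ((q−3+t)/4)·C_1^2 + ((q−3−t)/4)·C_0^2 as multisets; in particular, E is a skew PDS corresponding to the Paley (q,(q−1)/2,(q−5)/4,(q−1)/4)-PDS C_1^2 if t = −2, and corresponding to the Paley (q,(q−1)/2,(q−5)/4,(q−1)/4)-PDS C_0^2 if t = 2. -/

import Mathlib

open Finset

section Defs

variable {G : Type*} [AddCommGroup G] [Fintype G] [DecidableEq G]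

/-- The multiset `Δ(D)` of internal differences `x - y` (for `x ≠ y` in `D`). -/
def intDiff (D : Finset G) : Multiset G :=
  ((D ×ˢ D).filter (fun p => p.1 ≠ p.2)).val.map (fun p => p.1 - p.2)

/-- The multiset `Δ(D, E)` of external differences `x - y` for `x ∈ D`, `y ∈ E`. -/
def extDiff (D E : Finset G) : Multiset G :=
  (D ×ˢ E).val.map (fun p => p.1 - p.2)

/-- The finset `G^*` of nonzero elements of `G`. -/
def Gstar (G : Type*) [AddCommGroup G] [Fintype G] [DecidableEq G] : Finset G :=
  Finset.univ.erase 0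

/-- `A` is a `(v, k, lam, mu)` partial difference set in `G`:
`Δ(A) = lam • A^* + mu • (G^* \ A)`. -/
def IsPDS (A : Finset G) (v k lam mu : ℕ) : Prop :=
  Fintype.card G = v ∧ A.card = k ∧
    intDiff A = lam • (A.erase 0).val + mu • (Gstar G \ A).val

/-- `D` is a `(v, k, lam, mu)` skew partial difference set corresponding to the
`(v, k, lam, mu)`-PDS `A`: `Δ(D) = lam • A^* + mu • (G^* \ A)`. -/
def IsSkewPDS (D A : Finset G) (v k lam mu : ℕ) : Prop :=
  IsPDS A v k lam mu ∧ D.card = k ∧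
    intDiff D = lam • (A.erase 0).val + mu • (Gstar G \ A).val

/-- `D` is an `(n, m, k₁, …, k_m; lam, mu)` disjoint partial difference family relative
to `T`: the `D i` are pairwise disjoint subsets of `G^*` of sizes `k i`, and
`∑ i, Δ(D i) = lam • T + mu • (G^* \ T)`. -/
def IsDPDF {ι : Type*} [Fintype ι] (D : ι → Finset G) (n m : ℕ) (k : ι → ℕ)
    (T : Finset G) (lam mu : ℕ) : Prop :=
  Fintype.card G = n ∧ Fintype.card ι = m ∧
    (∀ i, (0 : G) ∉ D i) ∧ (∀ i, (D i).card = k i) ∧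
    (Pairwise (fun i j => Disjoint (D i) (D j))) ∧
    ∑ i, intDiff (D i) = lam • T.val + mu • (Gstar G \ T).val

/-- `D` is an `(n, m, k₁, …, k_m; lam, mu)` external partial difference family relative
to `T`: the `D i` are pairwise disjoint subsets of `G^*` of sizes `k i`, and
`∑_{i ≠ j}, Δ(D i, D j) = lam • T + mu • (G^* \ T)`. -/
def IsEPDF {ι : Type*} [Fintype ι] [DecidableEq ι] (D : ι → Finset G) (n m : ℕ)
    (k : ι → ℕ) (T : Finset G) (lam mu : ℕ) : Prop :=
  Fintype.card G = n ∧ Fintype.card ι = m ∧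
    (∀ i, (0 : G) ∉ D i) ∧ (∀ i, (D i).card = k i) ∧
    (Pairwise (fun i j => Disjoint (D i) (D j))) ∧
    ∑ i, ∑ j ∈ Finset.univ.erase i, extDiff (D i) (D j)
      = lam • T.val + mu • (Gstar G \ T).val

/-- `D` is an `(n, m, k₁, …, k_m, lam)` disjoint difference family:
`∑ i, Δ(D i) = lam • G^*`. -/
def IsDDF {ι : Type*} [Fintype ι] (D : ι → Finset G) (n m : ℕ) (k : ι → ℕ)
    (lam : ℕ) : Prop :=
  Fintype.card G = n ∧ Fintype.card ι = m ∧
    (∀ i, (0 : G) ∉ D i) ∧ (∀ i, (D i).card = k i) ∧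
    (Pairwise (fun i j => Disjoint (D i) (D j))) ∧
    ∑ i, intDiff (D i) = lam • (Gstar G).val

/-- `D` is an `(n, m, k₁, …, k_m, lam)` external difference family:
`∑_{i ≠ j}, Δ(D i, D j) = lam • G^*`. -/
def IsEDF {ι : Type*} [Fintype ι] [DecidableEq ι] (D : ι → Finset G) (n m : ℕ)
    (k : ι → ℕ) (lam : ℕ) : Prop :=
  Fintype.card G = n ∧ Fintype.card ι = m ∧
    (∀ i, (0 : G) ∉ D i) ∧ (∀ i, (D i).card = k i) ∧
    (Pairwise (fun i j => Disjoint (D i) (D j))) ∧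
    ∑ i, ∑ j ∈ Finset.univ.erase i, extDiff (D i) (D j) = lam • (Gstar G).val

end Defs

section Cyclotomy

variable {F : Type*} [Field F] [Fintype F] [DecidableEq F]

/-- The cyclotomic class `C_i^e = α^i ⟨α^e⟩` of order `e` in the finite field `F`,
with respect to the primitive element `α`.  (Since `α` has multiplicative order at most
`|F| - 1`, letting `j` range over `0, …, |F| - 1` captures the whole class.) -/
def cycClass (α : F) (e i : ℕ) : Finset F :=
  (Finset.range (Fintype.card F)).image (fun j => α ^ (e * j + i))

/-- `α` is a primitive element of the finite field `F`: every nonzero element of `F`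
is a power of `α`. -/
def IsPrimitiveElt (α : F) : Prop :=
  ∀ x : F, x ≠ 0 → ∃ n : ℕ, α ^ n = x

end Cyclotomy


section Helpers

set_option linter.all false

variable {F : Type*} [Field F] [Fintype F] [DecidableEq F]

lemma count_intDiff_zero (D : Finset F) : Multiset.count 0 (intDiff D) = 0 := by
  rw [Multiset.count_eq_zero]
  unfold intDiff
  simp only [Multiset.mem_map, Finset.mem_val, Finset.mem_filter]
  rintro ⟨p, ⟨_, h⟩, h2⟩
  exact h (sub_eq_zero.mp h2)

lemma count_intDiff (D : Finset F) (d : F) (hd : d ≠ 0) :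
    Multiset.count d (intDiff D) = (univ.filter (fun y => y ∈ D ∧ y + d ∈ D)).card := by
  unfold intDiff
  rw [Multiset.count_map, ← Finset.filter_val, Finset.card_val]
  refine Finset.card_bij' (fun p _ => p.2) (fun y _ => (y + d, y)) ?_ ?_ ?_ ?_
  · rintro ⟨x, y⟩ h
    simp only [Finset.mem_filter, Finset.mem_product, Finset.mem_univ, true_and] at h ⊢
    obtain ⟨⟨⟨h1, h2⟩, h3⟩, h4⟩ := h
    refine ⟨h2, ?_⟩
    rw [h4]; simpa using h1
  · intro y h
    simp only [Finset.mem_filter, Finset.mem_product, Finset.mem_univ, true_and] at h ⊢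
    refine ⟨⟨⟨h.2, h.1⟩, ?_⟩, ?_⟩
    · simpa using hd
    · ring
  · rintro ⟨x, y⟩ h
    simp only [Finset.mem_filter, Finset.mem_product, Finset.mem_univ, true_and] at h ⊢
    rw [h.2]; simp
  · intro y h
    rfl

lemma card_of_w (w : F → ℤ) (h0 : w 0 = 0) (h1 : ∀ x, x ≠ 0 → w x = 1 ∨ w x = -1)
    (hs : ∑ x, w x = 0) (D : Finset F) (hD : ∀ x, x ∈ D ↔ w x = 1) :
    2 * (D.card : ℤ) = (Fintype.card F : ℤ) - 1 := by
  have hDe : D = univ.filter (fun x => w x = 1) := by ext x; simp [hD]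
  have key : ∀ y : F, (2 * (if w y = 1 then (1 : ℤ) else 0)) =
      1 + w y - (if y = 0 then 1 else 0) := by
    intro y
    by_cases hy : y = 0
    · subst hy; simp [h0]
    · rcases h1 y hy with h | h <;> simp [h, hy]
  rw [hDe, Finset.card_filter]
  push_cast
  rw [Finset.mul_sum, Finset.sum_congr rfl (fun y _ => key y), Finset.sum_sub_distrib,
    Finset.sum_add_distrib, hs]
  simp

lemma count_of_w (w : F → ℤ) (h0 : w 0 = 0) (h1 : ∀ x, x ≠ 0 → w x = 1 ∨ w x = -1)
    (hs : ∑ x, w x = 0) (D : Finset F) (hD : ∀ x, x ∈ D ↔ w x = 1) (d : F) (hd : d ≠ 0) :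
    4 * (Multiset.count d (intDiff D) : ℤ) =
      (Fintype.card F : ℤ) - 2 - w d - w (-d) + ∑ x, w x * w (x + d) := by
  rw [count_intDiff D d hd, Finset.card_filter]
  push_cast
  have key : ∀ y : F, (4 * (if y ∈ D ∧ y + d ∈ D then (1 : ℤ) else 0)) =
      1 + w y + w (y + d) + w y * w (y + d)
        - (if y = 0 then (1 + w d) else 0) - (if y = -d then (1 + w (-d)) else 0) := by
    intro y
    simp only [hD]
    by_cases hy : y = 0
    · subst hy
      have : (0 : F) ≠ -d := by
        intro h; exact hd (by simpa using h.symm)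
      simp [h0, hd]
    · by_cases hy2 : y = -d
      · subst hy2
        simp [h0, hd]
      · have h3 : y + d ≠ 0 := fun h => hy2 (eq_neg_of_add_eq_zero_left h)
        rcases h1 y hy with h | h <;> rcases h1 _ h3 with h' | h' <;> simp [h, h', hy, hy2]
  rw [Finset.mul_sum, Finset.sum_congr rfl (fun y _ => key y), Finset.sum_sub_distrib,
    Finset.sum_sub_distrib, Finset.sum_add_distrib, Finset.sum_add_distrib,
    Finset.sum_add_distrib, hs]
  have : ∑ x, w (x + d) = 0 := by
    rw [← hs]; exact Fintype.sum_equiv (Equiv.addRight d) _ _ (fun x => rfl)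
  rw [this]
  simp
  ring

lemma sum_char_shift {R : Type*} [CommRing R] (ψ φ : MulChar F R) (d : F) (hd : d ≠ 0) :
    ∑ x, ψ x * φ (x + d) = ψ (-d) * φ d * jacobiSum ψ φ := by
  unfold jacobiSum
  rw [Finset.mul_sum]
  symm
  refine Fintype.sum_equiv (Equiv.mulLeft₀ (-d) (by simpa using hd)) _ _ (fun x => ?_)
  have : -d * x + d = d * (1 - x) := by ring
  simp only [Equiv.mulLeft₀_apply]
  rw [this, map_mul, map_mul]
  ring

lemma sum_inv_shift {R : Type*} [CommRing R] [IsDomain R] (ψ : MulChar F R) (hψ : ψ ≠ 1) (d : F)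
    (hd : d ≠ 0) : ∑ x, ψ x * ψ⁻¹ (x + d) = -1 := by
  rw [sum_char_shift _ _ _ hd, jacobiSum_nontrivial_inv hψ, MulChar.inv_apply', neg_eq_neg_one_mul d,
    map_mul]
  have h1 : ψ d * ψ d⁻¹ = 1 := by rw [← map_mul, mul_inv_cancel₀ hd, map_one]
  have h2 : ψ (-1) * ψ (-1) = 1 := by rw [← map_mul]; simp
  linear_combination (-ψ (-1) * ψ (-1)) * h1 - h2

lemma sum_pow_eq (i : ℕ) (hi : 0 < i) :
    ∑ x : F, x ^ i = if Fintype.card F - 1 ∣ i then -1 else 0 := by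
  rw [← FiniteField.sum_pow_units F i]
  rw [← Finset.sum_subset (Finset.subset_univ (univ.filter (fun x : F => x ≠ 0)))]
  · symm
    refine Finset.sum_bij (fun x _ => (x : F)) ?_ ?_ ?_ ?_
    · intro x _; simp
    · intro x _ y _ h; exact Units.ext h
    · intro y hy
      simp at hy
      exact ⟨Units.mk0 y hy, by simp, rfl⟩
    · intro x _; simp
  · intro x _ hx
    simp at hx
    subst hx
    exact zero_pow hi.ne'

lemma poly_sum (a b : ℕ) (ha : 0 < a) :
    ∑ x : F, x ^ a * (1 - x) ^ b = ∑ j ∈ Finset.range (b + 1),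
      (-1) ^ j * (b.choose j : F) * (if Fintype.card F - 1 ∣ (a + j) then -1 else 0) := by
  have : ∀ x : F, x ^ a * (1 - x) ^ b = ∑ j ∈ Finset.range (b + 1),
      (-1) ^ j * (b.choose j : F) * x ^ (a + j) := by
    intro x
    rw [sub_eq_add_neg, add_comm, add_pow, Finset.mul_sum]
    refine Finset.sum_congr rfl (fun j _ => ?_)
    rw [neg_pow]; ring
  rw [Finset.sum_congr rfl (fun x _ => this x), Finset.sum_comm]
  refine Finset.sum_congr rfl (fun j _ => ?_)
  rw [← Finset.mul_sum, sum_pow_eq _ (by omega)]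

lemma sum_low (k : ℕ) (hk : 0 < k) (hc : Fintype.card F = 4 * k + 1) :
    ∑ x : F, x ^ k * (1 - x) ^ k = 0 := by
  rw [poly_sum k k hk]
  refine Finset.sum_eq_zero (fun j hj => ?_)
  rw [Finset.mem_range] at hj
  rw [if_neg, mul_zero]
  rw [hc]
  intro h
  have := Nat.le_of_dvd (by omega) h
  omega

lemma sum_high (k : ℕ) (hk : 0 < k) (hc : Fintype.card F = 4 * k + 1) :
    ∑ x : F, x ^ (3 * k) * (1 - x) ^ (3 * k) = - ((-1) ^ k * ((3 * k).choose k : F)) := by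
  rw [poly_sum _ _ (by omega), Finset.sum_eq_single k]
  · rw [if_pos]
    · ring
    · rw [hc]; exact ⟨1, by omega⟩
  · intro j hj hjk
    rw [Finset.mem_range] at hj
    rw [if_neg, mul_zero]
    rw [hc]
    rintro ⟨c, hcc⟩
    rw [Nat.add_sub_cancel] at hcc
    rcases c with _ | _ | c
    · omega
    · omega
    · have : 4 * k * (c + 1 + 1) = 8 * k + 4 * k * c := by ring
      have : 0 ≤ 4 * k * c := Nat.zero_le _
      omega
  · intro h; exact absurd (Finset.mem_range.mpr (by omega)) h

lemma choose_ne (p : ℕ) (hp : p.Prime) (r : ℕ) (hr : p = 4 * r + 1) (m : ℕ) :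
    ∀ k, p ^ m = 4 * k + 1 → ¬ (p ∣ (3 * k).choose k) := by
  have := Fact.mk hp
  induction m with
  | zero =>
    intro k hk
    have : k = 0 := by simp at hk; omega
    subst this
    simpa using hp.one_lt.ne'
  | succ m ih =>
    intro k hk
    obtain ⟨k', hk'⟩ : ∃ k', p ^ m = 4 * k' + 1 := by
      have : p ^ m % 4 = 1 := by rw [Nat.pow_mod, hr]; simp [Nat.add_mod]
      exact ⟨p ^ m / 4, by omega⟩
    have hkk : k = r + p * k' := by
      rw [pow_succ, hk'] at hk
      nlinarith
    have hr0 : 3 * r < p := by omega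
    have h3 : 3 * k = 3 * r + p * (3 * k') := by rw [hkk]; ring
    have h := Choose.choose_modEq_choose_mod_mul_choose_div_nat (n := 3 * k) (k := k) (p := p)
    have e1 : (3 * k) % p = 3 * r := by rw [h3, Nat.add_mul_mod_self_left, Nat.mod_eq_of_lt hr0]
    have e2 : k % p = r := by rw [hkk, Nat.add_mul_mod_self_left, Nat.mod_eq_of_lt (by omega)]
    have e3 : (3 * k) / p = 3 * k' := by
      rw [h3, Nat.add_mul_div_left _ _ hp.pos, Nat.div_eq_of_lt hr0, zero_add]
    have e4 : k / p = k' := by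
      rw [hkk, Nat.add_mul_div_left _ _ hp.pos, Nat.div_eq_of_lt (by omega), zero_add]
    rw [e1, e2, e3, e4] at h
    rw [(Nat.ModEq.dvd_iff h dvd_rfl), hp.dvd_mul]
    rintro (h1 | h1)
    · have := hp.coprime_choose_of_lt hr0 (show r ≤ 3 * r by omega)
      exact (hp.coprime_iff_not_dvd.mp this) h1
    · exact ih k' hk' h1

lemma arith_core (p m : ℕ) (hp : p.Prime) (q s t a b : ℤ) (hq : q = (p : ℤ) ^ m)
    (hq8 : q % 8 = 5) (hst : q = s ^ 2 + t ^ 2) (hab : q = a ^ 2 + b ^ 2)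
    (hs4 : s % 4 = 1) (ha4 : a % 4 = 3) (hps : ¬ (p : ℤ) ∣ s) (hpa : ¬ (p : ℤ) ∣ a)
    (hdvd : (p : ℤ) ∣ a * t + b * s) : b = t := by
  have hp' : Prime (p : ℤ) := Nat.prime_iff_prime_int.mp hp
  have hm : m ≠ 0 := by
    rintro rfl
    simp at hq; omega
  have hpq : (p : ℤ) ∣ q := by rw [hq]; exact dvd_pow_self _ hm
  have hp2 : ¬ (p : ℤ) ∣ 2 := by
    intro h
    have h2 : p ∣ 2 := by exact_mod_cast h
    have : p = 2 := (Nat.prime_dvd_prime_iff_eq hp Nat.prime_two).mp h2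
    subst this
    have : (2 : ℤ) ∣ q := by exact_mod_cast hpq
    omega
  have hpt : ¬ (p : ℤ) ∣ t := by
    intro h
    have h1 : (p : ℤ) ∣ s ^ 2 := by
      have : s ^ 2 = q - t ^ 2 := by rw [hst]; ring
      rw [this]; exact dvd_sub hpq (dvd_pow h two_ne_zero)
    exact hps (hp'.dvd_of_dvd_pow h1)
  have hn : ¬ (p : ℤ) ∣ a * t - b * s := by
    intro h
    have h1 : (p : ℤ) ∣ 2 * (a * t) := by
      have := dvd_add hdvd h
      have e : a * t + b * s + (a * t - b * s) = 2 * (a * t) := by ring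
      rwa [e] at this
    rcases hp'.dvd_or_dvd h1 with h2 | h2
    · exact hp2 h2
    · rcases hp'.dvd_or_dvd h2 with h3 | h3
      · exact hpa h3
      · exact hpt h3
  have hprod : (a * t + b * s) * (a * t - b * s) = q * (a ^ 2 - s ^ 2) := by
    have e1 : t ^ 2 = q - s ^ 2 := by rw [hst]; ring
    have e2 : b ^ 2 = q - a ^ 2 := by rw [hab]; ring
    linear_combination a ^ 2 * e1 - s ^ 2 * e2
  have hqd : q ∣ a * t + b * s := by
    have hcop : IsCoprime q (a * t - b * s) := by
      rw [hq]
      exact IsCoprime.pow_left ((Prime.coprime_iff_not_dvd hp').mpr hn)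
    exact hcop.dvd_of_dvd_mul_right ⟨_, hprod⟩
  obtain ⟨c, hc⟩ := hqd
  have hqpos : 0 < q := by
    rw [hq]; exact pow_pos (by exact_mod_cast hp.pos) m
  have hbr : (a * t + b * s) ^ 2 + (a * s - b * t) ^ 2 = q * q := by
    nth_rewrite 1 [hab]; rw [hst]; ring
  have hbt : ∀ x y : ℤ, q = x ^ 2 + y ^ 2 → x % 2 = 1 → y % 2 = 0 := by
    intro x y h hx
    rcases Int.emod_two_eq_zero_or_one y with h0 | h0
    · exact h0
    · exfalso
      obtain ⟨x', rfl⟩ : ∃ x', x = 2 * x' + 1 := ⟨x / 2, by omega⟩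
      obtain ⟨y', rfl⟩ : ∃ y', y = 2 * y' + 1 := ⟨y / 2, by omega⟩
      ring_nf at h
      omega
  have ht := hbt s t hst (by omega)
  have hodd : a * s - b * t ≠ 0 := by
    intro h
    have h1 : (a * s - b * t) % 2 = 1 := by
      rw [Int.sub_emod, Int.mul_emod, Int.mul_emod b t, ht]
      have : a % 2 = 1 := by omega
      have h' : s % 2 = 1 := by omega
      rw [this, h']; simp
    rw [h] at h1; simp at h1
  have hc0 : c = 0 := by
    by_contra hcne
    have h1 : 1 ≤ c ^ 2 := by
      have := sq_pos_of_ne_zero hcne; omega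
    have h2 : 0 < (a * s - b * t) ^ 2 := sq_pos_of_ne_zero hodd
    rw [hc] at hbr
    nlinarith
  rw [hc0, mul_zero] at hc
  have h2 : a ^ 2 = s ^ 2 := by
    rw [hc, zero_mul] at hprod
    have := (mul_eq_zero.mp hprod.symm).resolve_left hqpos.ne'
    linarith
  rcases sq_eq_sq_iff_eq_or_eq_neg.mp h2 with h | h
  · omega
  · have hs0 : s ≠ 0 := by rintro rfl; simp at hs4
    have : s * (b - t) = 0 := by rw [h] at hc; linarith
    have := (mul_eq_zero.mp this).resolve_left hs0
    linarith

lemma prim_ne_zero (k : ℕ) (hk : 0 < k) (hc : Fintype.card F = 4 * k + 1) (α : F)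
    (hα : IsPrimitiveElt α) : α ≠ 0 := by
  rintro rfl
  have : (univ : Finset F) ⊆ {0, 1} := by
    intro x _
    by_cases hx : x = 0
    · simp [hx]
    · obtain ⟨n, hn⟩ := hα x hx
      rcases n with _ | n
      · simp at hn; simp [← hn]
      · simp at hn; simp [← hn]
  have h := Finset.card_le_card this
  have h2 := Finset.card_le_two (a := (0 : F)) (b := 1)
  rw [Finset.card_univ, hc] at h
  omega

lemma prim_gen (α : F) (hα : IsPrimitiveElt α) (h0 : α ≠ 0) (x : Fˣ) :
    x ∈ Subgroup.zpowers (Units.mk0 α h0) := by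
  obtain ⟨n, hn⟩ := hα x x.ne_zero
  exact ⟨n, Units.ext (by simpa using hn)⟩

lemma prim_order (k : ℕ) (hk : 0 < k) (hc : Fintype.card F = 4 * k + 1) (α : F)
    (hα : IsPrimitiveElt α) : orderOf α = 4 * k := by
  have h0 := prim_ne_zero k hk hc α hα
  have h1 := orderOf_eq_card_of_forall_mem_zpowers (prim_gen α hα h0)
  rw [← orderOf_units, Units.val_mk0] at h1
  rw [h1, Nat.card_eq_fintype_card, Fintype.card_units, hc]
  simp

lemma exists_mulChar {R : Type*} [CommRing R] (k : ℕ) (hk : 0 < k)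
    (hc : Fintype.card F = 4 * k + 1) (α : F)
    (hα : IsPrimitiveElt α) (ζ : R) (hζ : ζ ^ 4 = 1) : ∃ χ : MulChar F R, χ α = ζ := by
  have h0 := prim_ne_zero k hk hc α hα
  let z : Rˣ := Units.ofPowEqOne ζ 4 hζ (by norm_num)
  have hz : z ∈ rootsOfUnity (Fintype.card Fˣ) R := by
    rw [mem_rootsOfUnity, Fintype.card_units, hc, Nat.add_sub_cancel, pow_mul]
    have : z ^ 4 = 1 := Units.ext (by simpa [z] using hζ)
    rw [this, one_pow]
  refine ⟨MulChar.ofRootOfUnity hz (prim_gen α hα h0), ?_⟩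
  have := MulChar.ofRootOfUnity_spec hz (prim_gen α hα h0)
  simpa [z] using this

lemma half_pow (k : ℕ) (hk : 0 < k) (hc : Fintype.card F = 4 * k + 1) (α : F)
    (hα : IsPrimitiveElt α) : α ^ (2 * k) = -1 := by
  have h1 : α ^ (4 * k) = 1 := by rw [← prim_order k hk hc α hα]; exact pow_orderOf_eq_one α
  have h2 : α ^ (2 * k) ≠ 1 := by
    intro h
    have := Nat.le_of_dvd (by omega) (orderOf_dvd_of_pow_eq_one h)
    rw [prim_order k hk hc α hα] at this
    omega
  have h3 : (α ^ (2 * k)) ^ 2 = 1 := by rw [← pow_mul, ← h1]; congr 1; ring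
  exact (mul_self_eq_one_iff.mp (by rw [← sq]; exact h3)).resolve_left h2

/-- Every nonzero element is a power with small exponent. -/
lemma exists_small_pow (k : ℕ) (hk : 0 < k) (hc : Fintype.card F = 4 * k + 1) (α : F)
    (hα : IsPrimitiveElt α) (x : F) (hx : x ≠ 0) : ∃ n, n < 4 * k ∧ α ^ n = x := by
  obtain ⟨n, hn⟩ := hα x hx
  refine ⟨n % (4 * k), Nat.mod_lt _ (by omega), ?_⟩
  rw [← hn, ← prim_order k hk hc α hα, pow_mod_orderOf]

lemma mem_cyc (k : ℕ) (hk : 0 < k) (hc : Fintype.card F = 4 * k + 1) (α : F)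
    (hα : IsPrimitiveElt α) (e i : ℕ) (he : e ∣ 4) (hi : i < e) (n : ℕ) :
    α ^ n ∈ cycClass α e i ↔ n % e = i := by
  have ho := prim_order k hk hc α hα
  have hek : e ∣ 4 * k := he.mul_right k
  have h0 := prim_ne_zero k hk hc α hα
  constructor
  · intro h
    unfold cycClass at h
    simp only [Finset.mem_image] at h
    obtain ⟨j, _, hj⟩ := h
    have h1 : (e * j + i) ≡ n [MOD 4 * k] := by
      have hu : (Units.mk0 α h0) ^ (e * j + i) = (Units.mk0 α h0) ^ n :=
        Units.ext (by simpa using hj)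
      have := pow_inj_mod.mp hu
      rwa [← orderOf_units, Units.val_mk0, ho] at this
    have h2 : (e * j + i) ≡ n [MOD e] := h1.of_dvd hek
    unfold Nat.ModEq at h2
    rw [← h2, Nat.mul_add_mod, Nat.mod_eq_of_lt hi]
  · intro h
    unfold cycClass
    simp only [Finset.mem_image, Finset.mem_range]
    have hm : (n % (4 * k)) % e = i := by rw [Nat.mod_mod_of_dvd _ hek, h]
    refine ⟨n % (4 * k) / e, ?_, ?_⟩
    · have h1 : n % (4 * k) < 4 * k := Nat.mod_lt _ (by omega)
      have h2 : n % (4 * k) / e ≤ n % (4 * k) := Nat.div_le_self _ _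
      omega
    · have : e * (n % (4 * k) / e) + i = n % (4 * k) := by
        rw [← hm]; exact Nat.div_add_mod _ _
      rw [this, ← ho, pow_mod_orderOf]

lemma zero_not_mem_cyc (α : F) (h0 : α ≠ 0) (e i : ℕ) : (0 : F) ∉ cycClass α e i := by
  unfold cycClass
  simp only [Finset.mem_image, not_exists, not_and]
  intro j _ h
  exact pow_ne_zero _ h0 h

/-- The Gaussian unit `i`. -/
def gI : GaussianInt := ⟨0, 1⟩

lemma gI_sq : gI ^ 2 = -1 := by
  rw [sq]; ext <;> simp [gI]

lemma gI_four : gI ^ 4 = 1 := by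
  have : gI ^ 4 = (gI ^ 2) ^ 2 := by ring
  rw [this, gI_sq]; ring

lemma gI_star : star gI * gI = 1 := by
  ext <;> simp [gI]

lemma gI_pow (n : ℕ) : gI ^ n = gI ^ (n % 4) := by
  conv_lhs => rw [← Nat.div_add_mod n 4, pow_add, pow_mul, gI_four, one_pow, one_mul]

lemma gI_pow_re_im (n : ℕ) :
    ((gI ^ n).re + (gI ^ n).im = 1 ∧ (n % 4 = 0 ∨ n % 4 = 1)) ∨
    ((gI ^ n).re + (gI ^ n).im = -1 ∧ (n % 4 = 2 ∨ n % 4 = 3)) := by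
  rw [gI_pow]
  have h : n % 4 < 4 := Nat.mod_lt _ (by norm_num)
  have h3 : gI ^ 3 = -gI := by rw [pow_succ, gI_sq]; ring
  have : n % 4 = 0 ∨ n % 4 = 1 ∨ n % 4 = 2 ∨ n % 4 = 3 := by omega
  rcases this with h | h | h | h <;> rw [h]
  · left; simp
  · left; simp [gI]
  · right; rw [gI_sq]; simp
  · right; rw [h3]; simp [gI]

/-- the sign function attached to a Gaussian valued character -/
def wU (χ : MulChar F GaussianInt) (x : F) : ℤ := (χ x).re + (χ x).im


lemma chi_neg_one (k : ℕ) (hk : 0 < k) (hko : k % 2 = 1) (hc : Fintype.card F = 4 * k + 1) (α : F)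
    (hα : IsPrimitiveElt α) (χ : MulChar F GaussianInt) (hχ : χ α = gI)
    : χ (-1) = -1 := by
  rw [← half_pow k hk hc α hα, map_pow, hχ, pow_mul, gI_sq]
  exact Odd.neg_one_pow (Nat.odd_iff.mpr hko)

lemma wU_zero (k : ℕ) (hk : 0 < k) (hko : k % 2 = 1) (hc : Fintype.card F = 4 * k + 1) (α : F)
    (hα : IsPrimitiveElt α) (χ : MulChar F GaussianInt) (hχ : χ α = gI)
    : wU χ 0 = 0 := by simp [wU, MulChar.map_zero]

lemma wU_neg (k : ℕ) (hk : 0 < k) (hko : k % 2 = 1) (hc : Fintype.card F = 4 * k + 1) (α : F)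
    (hα : IsPrimitiveElt α) (χ : MulChar F GaussianInt) (hχ : χ α = gI)
    (x : F) : wU χ (-x) = - wU χ x := by
  unfold wU
  rw [neg_eq_neg_one_mul x, map_mul, chi_neg_one k hk hko hc α hα χ hχ]
  simp; ring

lemma wU_val (k : ℕ) (hk : 0 < k) (hko : k % 2 = 1) (hc : Fintype.card F = 4 * k + 1) (α : F)
    (hα : IsPrimitiveElt α) (χ : MulChar F GaussianInt) (hχ : χ α = gI)
    (x : F) (hx : x ≠ 0) : wU χ x = 1 ∨ wU χ x = -1 := by
  obtain ⟨n, hn⟩ := hα x hx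
  unfold wU
  rw [← hn, map_pow, hχ]
  rcases gI_pow_re_im n with h | h
  · exact Or.inl h.1
  · exact Or.inr h.1

lemma mem_E (k : ℕ) (hk : 0 < k) (hko : k % 2 = 1) (hc : Fintype.card F = 4 * k + 1) (α : F)
    (hα : IsPrimitiveElt α) (χ : MulChar F GaussianInt) (hχ : χ α = gI)
    (x : F) : x ∈ cycClass α 4 0 ∪ cycClass α 4 1 ↔ wU χ x = 1 := by
  have h0 := prim_ne_zero k hk hc α hα
  by_cases hx : x = 0
  · subst hx
    rw [Finset.mem_union]
    have e : wU χ 0 = 0 := by simp [wU, MulChar.map_zero]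
    simp [zero_not_mem_cyc α h0, e]
  · obtain ⟨n, hn⟩ := hα x hx
    rw [← hn, Finset.mem_union, mem_cyc k hk hc α hα 4 0 (by norm_num) (by norm_num),
      mem_cyc k hk hc α hα 4 1 (by norm_num) (by norm_num)]
    unfold wU
    rw [map_pow, hχ]
    rcases gI_pow_re_im n with h | h
    · simp [h.1, h.2]
    · rw [h.1]
      have := h.2
      constructor
      · intro h'; omega
      · intro h'; norm_num at h'

lemma sum_wU (k : ℕ) (hk : 0 < k) (hko : k % 2 = 1) (hc : Fintype.card F = 4 * k + 1) (α : F)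
    (hα : IsPrimitiveElt α) (χ : MulChar F GaussianInt) (hχ : χ α = gI)
    : ∑ x, wU χ x = 0 := by
  have h : ∑ x, wU χ x = ∑ x, wU χ (-x) :=
    (Fintype.sum_equiv (Equiv.neg F) _ _ (fun x => rfl)).symm
  simp only [wU_neg k hk hko hc α hα χ hχ, Finset.sum_neg_distrib] at h
  omega

lemma chi_ne_one (k : ℕ) (hk : 0 < k) (hko : k % 2 = 1) (hc : Fintype.card F = 4 * k + 1) (α : F)
    (hα : IsPrimitiveElt α) (χ : MulChar F GaussianInt) (hχ : χ α = gI)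
    : χ ≠ 1 := by
  intro h
  have h1 := chi_neg_one k hk hko hc α hα χ hχ
  rw [h] at h1
  rw [MulChar.one_apply (by simp)] at h1
  have := congrArg Zsqrtd.re h1
  simp at this

lemma chi_inv (k : ℕ) (hk : 0 < k) (hko : k % 2 = 1) (hc : Fintype.card F = 4 * k + 1) (α : F)
    (hα : IsPrimitiveElt α) (χ : MulChar F GaussianInt) (hχ : χ α = gI)
    (x : F) : χ⁻¹ x = star (χ x) := by
  by_cases hx : x = 0
  · subst hx; simp [MulChar.map_zero]
  · obtain ⟨n, hn⟩ := hα x hx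
    have e1 : χ x = gI ^ n := by rw [← hn, map_pow, hχ]
    have e2 : star (χ x) * χ x = 1 := by
      rw [e1, star_pow, ← mul_pow, gI_star, one_pow]
    have e3 : χ⁻¹ x * χ x = 1 := by
      rw [MulChar.inv_apply', ← map_mul, inv_mul_cancel₀ hx, map_one]
    have e4 : χ x ≠ 0 := by intro h; rw [h] at e3; simp at e3
    exact mul_right_cancel₀ e4 (e3.trans e2.symm)

lemma chi_sq_ne_one (k : ℕ) (hk : 0 < k) (hko : k % 2 = 1) (hc : Fintype.card F = 4 * k + 1) (α : F)
    (hα : IsPrimitiveElt α) (χ : MulChar F GaussianInt) (hχ : χ α = gI)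
    : χ * χ ≠ 1 := by
  intro h
  have h1 : (χ * χ) α = -1 := by rw [MulChar.mul_apply, hχ, ← sq, gI_sq]
  rw [h, MulChar.one_apply (isUnit_iff_ne_zero.mpr (prim_ne_zero k hk hc α hα))] at h1
  have := congrArg Zsqrtd.re h1
  simp at this

lemma jac_inv (k : ℕ) (hk : 0 < k) (hko : k % 2 = 1) (hc : Fintype.card F = 4 * k + 1) (α : F)
    (hα : IsPrimitiveElt α) (χ : MulChar F GaussianInt) (hχ : χ α = gI)
    : jacobiSum χ⁻¹ χ⁻¹ = star (jacobiSum χ χ) := by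
  unfold jacobiSum
  rw [star_sum]
  refine Finset.sum_congr rfl (fun x _ => ?_)
  rw [chi_inv k hk hko hc α hα χ hχ, chi_inv k hk hko hc α hα χ hχ, star_mul']

lemma jac_norm (k : ℕ) (hk : 0 < k) (hko : k % 2 = 1) (hc : Fintype.card F = 4 * k + 1) (α : F)
    (hα : IsPrimitiveElt α) (χ : MulChar F GaussianInt) (hχ : χ α = gI)
    : (jacobiSum χ χ).re ^ 2 + (jacobiSum χ χ).im ^ 2 = 4 * k + 1 := by
  have hinj : Function.Injective GaussianInt.toComplex := by
    intro x y h
    exact GaussianInt.toComplex_inj.mp h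
  have hch : ringChar ℂ ≠ ringChar F := by
    rw [ringChar.eq_zero]
    intro h
    exact (CharP.ringChar_ne_zero_of_finite F) h.symm
  have hne : ∀ ψ : MulChar F GaussianInt, ψ ≠ 1 → ψ.ringHomComp GaussianInt.toComplex ≠ 1 := by
    intro ψ h
    exact (MulChar.ringHomComp_ne_one_iff hinj).mpr h
  have h1 := hne χ (chi_ne_one k hk hko hc α hα χ hχ)
  have h2 := hne (χ * χ) (chi_sq_ne_one k hk hko hc α hα χ hχ)
  rw [MulChar.ringHomComp_mul] at h2
  have h3 := jacobiSum_mul_jacobiSum_inv hch h1 h1 h2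
  rw [MulChar.ringHomComp_inv, jacobiSum_ringHomComp, jacobiSum_ringHomComp, ← map_mul,
    jac_inv k hk hko hc α hα χ hχ, hc] at h3
  have h4 : jacobiSum χ χ * star (jacobiSum χ χ) = ((4 * k + 1 : ℕ) : GaussianInt) := by
    apply hinj; rw [h3]; exact (map_natCast _ _).symm
  have h5 := congrArg Zsqrtd.re h4
  rw [Zsqrtd.re_mul] at h5
  simp at h5
  linarith

lemma sum_wU_shift (k : ℕ) (hk : 0 < k) (hko : k % 2 = 1) (hc : Fintype.card F = 4 * k + 1) (α : F)
    (hα : IsPrimitiveElt α) (χ : MulChar F GaussianInt) (hχ : χ α = gI)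
    (d : F) (hd : d ≠ 0) :
    ∑ x, wU χ x * wU χ (x + d) = -1 - ((χ d) ^ 2 * jacobiSum χ χ).im := by
  have h : ∀ x, wU χ x * wU χ (x + d) = (χ x * χ⁻¹ (x + d)).re + (χ x * χ (x + d)).im := by
    intro x
    rw [chi_inv k hk hko hc α hα χ hχ, Zsqrtd.re_mul, Zsqrtd.im_mul]
    unfold wU
    simp; ring
  have hre : ∀ f : F → GaussianInt, ∑ x, (f x).re = (∑ x, f x).re := by
    intro f
    exact (map_sum (⟨⟨Zsqrtd.re, rfl⟩, fun _ _ => rfl⟩ : GaussianInt →+ ℤ) f univ).symm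
  have him : ∀ f : F → GaussianInt, ∑ x, (f x).im = (∑ x, f x).im := by
    intro f
    exact (map_sum (⟨⟨Zsqrtd.im, rfl⟩, fun _ _ => rfl⟩ : GaussianInt →+ ℤ) f univ).symm
  rw [Finset.sum_congr rfl (fun x _ => h x), Finset.sum_add_distrib, hre, him,
    sum_inv_shift χ (chi_ne_one k hk hko hc α hα χ hχ) d hd, sum_char_shift χ χ d hd,
    neg_eq_neg_one_mul d, map_mul, chi_neg_one k hk hko hc α hα χ hχ]
  have : -1 * χ d * χ d * jacobiSum χ χ = - (χ d ^ 2 * jacobiSum χ χ) := by ring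
  rw [this]
  simp; ring



lemma eta_val (k : ℕ) (hk : 0 < k) (hc : Fintype.card F = 4 * k + 1) (α : F)
    (hα : IsPrimitiveElt α)
    (η : MulChar F ℤ) (hη : η α = -1)
    (x : F) (hx : x ≠ 0) : η x = 1 ∨ η x = -1 := by
  obtain ⟨n, hn⟩ := hα x hx
  rw [← hn, map_pow, hη]
  exact neg_one_pow_eq_or ℤ n

lemma eta_neg_one (k : ℕ) (hk : 0 < k) (hc : Fintype.card F = 4 * k + 1) (α : F)
    (hα : IsPrimitiveElt α)
    (η : MulChar F ℤ) (hη : η α = -1)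
    : η (-1) = 1 := by
  rw [← half_pow k hk hc α hα, map_pow, hη, pow_mul]; simp

lemma eta_ne_one (k : ℕ) (hk : 0 < k) (hc : Fintype.card F = 4 * k + 1) (α : F)
    (hα : IsPrimitiveElt α)
    (η : MulChar F ℤ) (hη : η α = -1)
    : η ≠ 1 := by
  intro h
  rw [h, MulChar.one_apply (isUnit_iff_ne_zero.mpr (prim_ne_zero k hk hc α hα))] at hη
  norm_num at hη

lemma eta_inv (k : ℕ) (hk : 0 < k) (hc : Fintype.card F = 4 * k + 1) (α : F)
    (hα : IsPrimitiveElt α)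
    (η : MulChar F ℤ) (hη : η α = -1)
    : η⁻¹ = η := by
  ext x
  have h3 : η⁻¹ x * η x = 1 := by
    rw [MulChar.inv_apply', ← map_mul, inv_mul_cancel₀ x.ne_zero, map_one]
  rcases eta_val k hk hc α hα η hη x x.ne_zero with h | h <;> rw [h] at h3 ⊢ <;> linarith

lemma sum_eta_shift (k : ℕ) (hk : 0 < k) (hc : Fintype.card F = 4 * k + 1) (α : F)
    (hα : IsPrimitiveElt α)
    (η : MulChar F ℤ) (hη : η α = -1)
    (d : F) (hd : d ≠ 0) : ∑ x, η x * η (x + d) = -1 := by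
  have := sum_inv_shift η (eta_ne_one k hk hc α hα η hη) d hd
  rwa [eta_inv k hk hc α hα η hη] at this

lemma mem_C20 (k : ℕ) (hk : 0 < k) (hc : Fintype.card F = 4 * k + 1) (α : F)
    (hα : IsPrimitiveElt α)
    (η : MulChar F ℤ) (hη : η α = -1)
    (x : F) : x ∈ cycClass α 2 0 ↔ η x = 1 := by
  by_cases hx : x = 0
  · subst hx
    simp [zero_not_mem_cyc α (prim_ne_zero k hk hc α hα), MulChar.map_zero]
  · obtain ⟨n, hn⟩ := hα x hx
    rw [← hn, mem_cyc k hk hc α hα 2 0 (by norm_num) (by norm_num), map_pow, hη]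
    rw [neg_one_pow_eq_one_iff_even (by norm_num), Nat.even_iff]

lemma mem_C21 (k : ℕ) (hk : 0 < k) (hc : Fintype.card F = 4 * k + 1) (α : F)
    (hα : IsPrimitiveElt α)
    (η : MulChar F ℤ) (hη : η α = -1)
    (x : F) : x ∈ cycClass α 2 1 ↔ η x = -1 := by
  by_cases hx : x = 0
  · subst hx
    simp [zero_not_mem_cyc α (prim_ne_zero k hk hc α hα), MulChar.map_zero]
  · obtain ⟨n, hn⟩ := hα x hx
    rw [← hn, mem_cyc k hk hc α hα 2 1 (by norm_num) (by norm_num), map_pow, hη]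
    rw [neg_one_pow_eq_neg_one_iff_odd (by norm_num), Nat.odd_iff]

lemma chi_sq (k : ℕ) (hk : 0 < k) (hc : Fintype.card F = 4 * k + 1) (α : F)
    (hα : IsPrimitiveElt α) (χ : MulChar F GaussianInt) (hχ : χ α = gI)
    (η : MulChar F ℤ) (hη : η α = -1)
    (x : F) : χ x ^ 2 = ((η x : ℤ) : GaussianInt) := by
  by_cases hx : x = 0
  · subst hx; simp [MulChar.map_zero]
  · obtain ⟨n, hn⟩ := hα x hx
    rw [← hn, map_pow, map_pow, hη, hχ, ← pow_mul, mul_comm, pow_mul, gI_sq]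
    push_cast; rfl



lemma red_exists (k : ℕ) (hk : 0 < k) (hko : k % 2 = 1) (hc : Fintype.card F = 4 * k + 1) (α : F)
    (hα : IsPrimitiveElt α) (χ : MulChar F GaussianInt) (hχ : χ α = gI)
    : ∃ φ : GaussianInt →+* F, (∀ z, φ z = (z.re : F) + (z.im : F) * α ^ k) ∧
    (∀ x, φ (χ x) = x ^ k) ∧ (∀ x, φ (χ⁻¹ x) = x ^ (3 * k)) := by
  have hι : α ^ k * α ^ k = ((-1 : ℤ) : F) := by
    rw [← pow_add, ← two_mul, half_pow k hk hc α hα]; simp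
  let φ : GaussianInt →+* F := Zsqrtd.lift ⟨α ^ k, hι⟩
  have hφ : ∀ z, φ z = (z.re : F) + (z.im : F) * α ^ k := fun z => rfl
  have h1 : ∀ x, φ (χ x) = x ^ k := by
    intro x
    by_cases hx : x = 0
    · subst hx; rw [MulChar.map_zero, map_zero, zero_pow hk.ne']
    · obtain ⟨n, hn⟩ := hα x hx
      rw [← hn, map_pow, hχ, map_pow, hφ]
      simp [gI]
      rw [← pow_mul, ← pow_mul, mul_comm]
  refine ⟨φ, hφ, h1, ?_⟩
  intro x
  by_cases hx : x = 0
  · subst hx; rw [MulChar.map_zero, map_zero, zero_pow (by omega)]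
  · rw [MulChar.inv_apply', h1]
    have h4 : x ^ (4 * k) = 1 := by
      have := FiniteField.pow_card_sub_one_eq_one x hx
      rwa [hc, Nat.add_sub_cancel] at this
    have : x ^ k * x ^ (3 * k) = 1 := by rw [← pow_add, ← h4]; congr 1; ring
    rw [inv_pow]
    exact inv_eq_of_mul_eq_one_right this

lemma jac_red (k : ℕ) (hk : 0 < k) (hko : k % 2 = 1) (hc : Fintype.card F = 4 * k + 1) (α : F)
    (hα : IsPrimitiveElt α) (χ : MulChar F GaussianInt) (hχ : χ α = gI)
    : ((jacobiSum χ χ).re : F) + ((jacobiSum χ χ).im : F) * α ^ k = 0 ∧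
    ((jacobiSum χ χ).re : F) - ((jacobiSum χ χ).im : F) * α ^ k
      = - ((-1) ^ k * ((3 * k).choose k : F)) := by
  obtain ⟨φ, h1, h2, h3⟩ := red_exists k hk hko hc α hα χ hχ
  constructor
  · rw [← h1]
    unfold jacobiSum
    rw [map_sum, ← sum_low k hk hc]
    refine Finset.sum_congr rfl (fun x _ => ?_)
    rw [map_mul, h2, h2]
  · rw [← sum_high k hk hc]
    have : ((jacobiSum χ χ).re : F) - ((jacobiSum χ χ).im : F) * α ^ k
        = φ (star (jacobiSum χ χ)) := by
      rw [h1]; simp; ring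
    rw [this, ← jac_inv k hk hko hc α hα χ hχ]
    unfold jacobiSum
    rw [map_sum]
    refine Finset.sum_congr rfl (fun x _ => ?_)
    rw [map_mul, h3, h3]



lemma eta_half (k : ℕ) (hk : 0 < k) (hko : k % 2 = 1) (hc : Fintype.card F = 4 * k + 1) (α : F)
    (hα : IsPrimitiveElt α) (χ : MulChar F GaussianInt) (hχ : χ α = gI)
    (η : MulChar F ℤ) (hη : η α = -1)
    (h : F) (hh : 2 * h = 1) : η h = -1 := by
  have h2 : (2 : F) ≠ 0 := by intro h'; rw [h'] at hh; simp at hh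
  have hns : ¬ IsSquare (2 : F) := by
    rw [FiniteField.isSquare_two_iff, hc]
    omega
  have e2 : η 2 = -1 := by
    obtain ⟨n, hn⟩ := hα 2 h2
    rw [← hn, map_pow, hη]
    rw [neg_one_pow_eq_neg_one_iff_odd (by norm_num)]
    by_contra ho
    rw [Nat.not_odd_iff_even] at ho
    apply hns
    rw [← hn]
    exact ho.isSquare_pow α
  have := congrArg η hh
  rw [map_mul, e2, map_one] at this
  linarith

lemma jac_re_mod (k : ℕ) (hk : 0 < k) (hko : k % 2 = 1) (hc : Fintype.card F = 4 * k + 1) (α : F)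
    (hα : IsPrimitiveElt α) (χ : MulChar F GaussianInt) (hχ : χ α = gI)
    (η : MulChar F ℤ) (hη : η α = -1)
    : (jacobiSum χ χ).re % 4 = 3 := by
  have hns : ¬ IsSquare (2 : F) := by
    rw [FiniteField.isSquare_two_iff, hc]
    omega
  have h2 : (2 : F) ≠ 0 := by
    intro h; apply hns; rw [h]; exact ⟨0, by simp⟩
  obtain ⟨h, hh⟩ : ∃ h : F, 2 * h = 1 := ⟨2⁻¹, mul_inv_cancel₀ h2⟩
  have h0 : h ≠ 0 := by rintro rfl; simp at hh
  have hne : h ≠ -h := by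
    intro h'
    have : 2 * h = 0 := by linear_combination h'
    rw [hh] at this; simp at this
  set g : F → GaussianInt := fun y => χ (h + y) * χ (h - y) with hg
  have hgn : ∀ y, g (-y) = g y := by
    intro y; simp only [hg]; rw [sub_neg_eq_add, ← sub_eq_add_neg, mul_comm]
  have hJ : jacobiSum χ χ = ∑ y, g y := by
    unfold jacobiSum
    symm
    refine Fintype.sum_equiv (Equiv.addLeft h) _ _ (fun y => ?_)
    simp only [hg, Equiv.coe_addLeft]
    congr 2
    linear_combination hh
  set T : GaussianInt := ∑ y, if wU χ y = 1 then g y else 0 with hT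
  have hw0 : wU χ 0 = 0 := by simp [wU, MulChar.map_zero]
  have hwn := wU_neg k hk hko hc α hα χ hχ
  have hJ2 : jacobiSum χ χ = -1 + 2 * T := by
    have e : ∀ y, g y = (if y = 0 then g 0 else 0) + (if wU χ y = 1 then g y else 0) +
        (if wU χ (-y) = 1 then g (-y) else 0) := by
      intro y
      rw [hgn, hwn]
      by_cases hy : y = 0
      · subst hy; simp [hw0]
      · rcases wU_val k hk hko hc α hα χ hχ y hy with h | h <;> simp [h, hy]
    have e2 : ∑ y, (if wU χ (-y) = 1 then g (-y) else 0) = T :=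
      Fintype.sum_equiv (Equiv.neg F) _ _ (fun y => rfl)
    rw [hJ, Finset.sum_congr rfl (fun y _ => e y), Finset.sum_add_distrib,
      Finset.sum_add_distrib, e2, ← hT]
    have e3 : g 0 = -1 := by
      simp only [hg, add_zero, sub_zero]
      rw [← sq, chi_sq k hk hc α hα χ hχ η hη, eta_half k hk hko hc α hα χ hχ η hη h hh]
      simp
    simp [e3]; ring
  -- parity of `T`
  let π : GaussianInt →+* ZMod 2 := Zsqrtd.lift ⟨1, by decide⟩
  have hπ : ∀ z : GaussianInt, π z = (z.re : ZMod 2) + (z.im : ZMod 2) := by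
    intro z
    have : π z = (z.re : ZMod 2) + (z.im : ZMod 2) * 1 := rfl
    rw [this, mul_one]
  have hπχ : ∀ x, x ≠ 0 → π (χ x) = 1 := by
    intro x hx
    obtain ⟨n, hn⟩ := hα x hx
    rw [← hn, map_pow, hχ, map_pow, hπ]
    simp [gI]
  have hD := card_of_w (wU χ) hw0 (wU_val k hk hko hc α hα χ hχ)
    (sum_wU k hk hko hc α hα χ hχ) _ (mem_E k hk hko hc α hα χ hχ)
  have hDe : cycClass α 4 0 ∪ cycClass α 4 1 = univ.filter (fun x => wU χ x = 1) := by
    ext x; rw [mem_E k hk hko hc α hα χ hχ]; simp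
  rw [hDe, hc] at hD
  have hcard : (univ.filter (fun x => wU χ x = 1)).card = 2 * k := by
    push_cast at hD; omega
  have hπT : π T = 1 := by
    rw [hT, map_sum]
    have e : ∀ y, π (if wU χ y = 1 then g y else 0) = (if wU χ y = 1 then 1 else 0) -
        (if y = h then (if wU χ h = 1 then 1 else 0) else 0) -
        (if y = -h then (if wU χ (-h) = 1 then 1 else 0) else 0) := by
      intro y
      by_cases hy : y = h
      · subst hy
        have : g y = 0 := by simp [hg, MulChar.map_zero]
        simp [this, hne]
      · by_cases hy2 : y = -h
        · subst hy2
          have : g (-h) = 0 := by simp [hg, MulChar.map_zero]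
          simp [this, hne.symm]
        · have e1 : h + y ≠ 0 := fun h' => hy2 (by linear_combination h')
          have e2 : h - y ≠ 0 := fun h' => hy (by linear_combination -h')
          have : π (g y) = 1 := by simp only [hg]; rw [map_mul, hπχ _ e1, hπχ _ e2, mul_one]
          simp only [hy, hy2, if_false, sub_zero]
          split_ifs <;> simp [this]
    rw [Finset.sum_congr rfl (fun y _ => e y), Finset.sum_sub_distrib, Finset.sum_sub_distrib,
      Finset.sum_boole, hcard]
    simp only [Finset.sum_ite_eq', Finset.mem_univ, if_true]
    rw [hwn]
    have : ((2 * k : ℕ) : ZMod 2) = 0 := by push_cast; rw [show (2 : ZMod 2) = 0 from rfl]; simp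
    rw [this]
    rcases wU_val k hk hko hc α hα χ hχ h h0 with h | h <;> rw [h] <;> simp <;> decide
  rw [hπ] at hπT
  have hpar : (T.re + T.im) % 2 = 1 := by
    have h1 : ((T.re + T.im : ℤ) : ZMod 2) = ((1 : ℤ) : ZMod 2) := by push_cast; exact hπT
    rw [ZMod.intCast_eq_intCast_iff] at h1
    exact h1
  have hn := jac_norm k hk hko hc α hα χ hχ
  have hre : (jacobiSum χ χ).re = -1 + 2 * T.re := by rw [hJ2, two_mul]; simp; ring
  have him : (jacobiSum χ χ).im = 2 * T.im := by rw [hJ2, two_mul]; simp; ring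
  rw [hre, him] at hn
  rw [hre]
  obtain ⟨j, hj⟩ : ∃ j : ℤ, (k : ℤ) = 2 * j + 1 := ⟨(k : ℤ) / 2, by omega⟩
  rw [hj] at hn
  by_contra hcon
  obtain ⟨A, hA⟩ : ∃ A, T.re = 2 * A + 1 := ⟨T.re / 2, by omega⟩
  obtain ⟨B, hB⟩ : ∃ B, T.im = 2 * B := ⟨T.im / 2, by omega⟩
  rw [hA, hB] at hn
  have h1 : (-1 + 2 * (2 * A + 1)) ^ 2 + (2 * (2 * B)) ^ 2 =
    8 * (2 * A ^ 2 + A + 2 * B ^ 2) + 1 := by ring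
  rw [h1] at hn
  omega

lemma jac_im (k : ℕ) (hk : 0 < k) (hko : k % 2 = 1) (hc : Fintype.card F = 4 * k + 1) (α : F)
    (hα : IsPrimitiveElt α) (χ : MulChar F GaussianInt) (hχ : χ α = gI)
    (η : MulChar F ℤ) (hη : η α = -1)
    (p m : ℕ) (hp : p.Prime) (hq : Fintype.card F = p ^ m) (s t : ℤ)
    (hst : (4 * k + 1 : ℤ) = s ^ 2 + t ^ 2) (hps : ¬((p : ℤ) ∣ s)) (hs4 : s % 4 = 1)
    (ht : (t : F) * α ^ k = (s : F)) : (jacobiSum χ χ).im = t := by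
  have := Fact.mk hp
  have hcp : CharP F p := charP_of_card_eq_prime_pow hq
  have hpm : p ^ m = 4 * k + 1 := by rw [← hq, hc]
  obtain ⟨r, hr⟩ : ∃ r, p = 4 * r + 1 := by
    have h8 : p ^ m % 8 = 5 := by omega
    have hp8 : p % 8 < 8 := Nat.mod_lt _ (by norm_num)
    rcases Nat.even_or_odd' m with ⟨l, hl | hl⟩
    · exfalso
      rw [hl, pow_mul, Nat.pow_mod, Nat.pow_mod p 2] at h8
      interval_cases h : p % 8 <;> simp at h8 <;>
        (rcases l with _ | l <;> simp [pow_succ, Nat.mul_mod] at h8 <;> omega)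
    · rw [hl, pow_succ, pow_mul, Nat.mul_mod, Nat.pow_mod, Nat.pow_mod p 2] at h8
      have : p % 8 = 5 := by
        interval_cases h : p % 8 <;> simp at h8 ⊢ <;>
        (rcases l with _ | l <;> simp [pow_succ, Nat.mul_mod] at h8 <;> omega)
      exact ⟨p / 4, by omega⟩
  obtain ⟨e1, e2⟩ := jac_red k hk hko hc α hα χ hχ
  have hne : ((3 * k).choose k : F) ≠ 0 := by
    rw [Ne, CharP.cast_eq_zero_iff F p]
    exact choose_ne p hp r hr m k hpm
  have hpa : ¬ (p : ℤ) ∣ (jacobiSum χ χ).re := by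
    intro h
    rw [← CharP.intCast_eq_zero_iff F p] at h
    rw [h, zero_add] at e1
    rw [h, e1, sub_zero] at e2
    have := neg_eq_zero.mp e2.symm
    rcases mul_eq_zero.mp this with h' | h'
    · exact pow_ne_zero k (by simp) h'
    · exact hne h'
  have hι : α ^ k ≠ 0 := pow_ne_zero _ (prim_ne_zero k hk hc α hα)
  refine arith_core p m hp (4 * k + 1) s t _ _ (by exact_mod_cast hpm.symm) (by omega) hst
    (jac_norm k hk hko hc α hα χ hχ).symm hs4
    (jac_re_mod k hk hko hc α hα χ hχ η hη) hps hpa ?_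
  rw [← CharP.intCast_eq_zero_iff F p]
  push_cast
  rw [← ht]
  linear_combination (t : F) * e1


lemma multiset_of_count (D A B : Finset F) (a b : ℕ) (hA : (0 : F) ∉ A) (hB : (0 : F) ∉ B)
    (hAB : ∀ x, x ≠ 0 → (x ∈ A ∧ x ∉ B ∧ Multiset.count x (intDiff D) = a) ∨
      (x ∈ B ∧ x ∉ A ∧ Multiset.count x (intDiff D) = b)) :
    intDiff D = a • A.val + b • B.val := by
  ext x
  rw [Multiset.count_add, Multiset.count_nsmul, Multiset.count_nsmul]
  by_cases hx : x = 0
  · subst hx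
    rw [count_intDiff_zero, Multiset.count_eq_zero_of_notMem (by simpa using hA),
      Multiset.count_eq_zero_of_notMem (by simpa using hB)]
    simp
  · rcases hAB x hx with ⟨h1, h2, h3⟩ | ⟨h1, h2, h3⟩
    · rw [h3, Multiset.count_eq_one_of_mem A.nodup (by simpa using h1),
        Multiset.count_eq_zero_of_notMem (by simpa using h2)]
      simp
    · rw [h3, Multiset.count_eq_one_of_mem B.nodup (by simpa using h1),
        Multiset.count_eq_zero_of_notMem (by simpa using h2)]
      simp

end Helpers

/-- For a prime power `q = p^m ≡ 5 (mod 8)` with the Katre–Rajwade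
normalized representation `q = s² + t²`, the set `E = C_0^4 ∪ C_1^4` satisfies
`Δ(E) = ((q-3+t)/4) • C_1^2 + ((q-3-t)/4) • C_0^2`; in particular `E` is a skew PDS
corresponding to the Paley PDS `C_1^2` if `t = -2`, and to `C_0^2` if `t = 2`. -/
theorem stmt_2 {F : Type*} [Field F] [Fintype F] [DecidableEq F]
    (q p m : ℕ) (hp : p.Prime) (hq : Fintype.card F = q) (hqpm : q = p ^ m)
    (hq8 : q % 8 = 5)
    (α : F) (hα : IsPrimitiveElt α)
    (s t : ℤ) (hst : (q : ℤ) = s ^ 2 + t ^ 2)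
    (hps : ¬((p : ℤ) ∣ s)) (hs4 : s % 4 = 1)
    (ht : (t : F) * α ^ ((q - 1) / 4) = (s : F)) :
    (∃ a b : ℕ, 4 * (a : ℤ) = (q : ℤ) - 3 + t ∧ 4 * (b : ℤ) = (q : ℤ) - 3 - t ∧
      intDiff (cycClass α 4 0 ∪ cycClass α 4 1) =
        a • (cycClass α 2 1).val + b • (cycClass α 2 0).val) ∧
    (t = -2 → IsSkewPDS (cycClass α 4 0 ∪ cycClass α 4 1) (cycClass α 2 1)
        q ((q - 1) / 2) ((q - 5) / 4) ((q - 1) / 4)) ∧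
    (t = 2 → IsSkewPDS (cycClass α 4 0 ∪ cycClass α 4 1) (cycClass α 2 0)
        q ((q - 1) / 2) ((q - 5) / 4) ((q - 1) / 4)) := by
  obtain ⟨k, hk⟩ : ∃ k, q = 4 * k + 1 := ⟨q / 4, by omega⟩
  have hk0 : 0 < k := by omega
  have hko : k % 2 = 1 := by omega
  have hc : Fintype.card F = 4 * k + 1 := by rw [hq, hk]
  obtain ⟨χ, hχ⟩ := exists_mulChar k hk0 hc α hα gI gI_four
  obtain ⟨η, hη⟩ := exists_mulChar k hk0 hc α hα (-1 : ℤ) (by norm_num)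
  have hqk : (q - 1) / 4 = k := by omega
  rw [hqk] at ht
  have hst' : (4 * k + 1 : ℤ) = s ^ 2 + t ^ 2 := by rw [← hst, hk]; push_cast; ring
  have him := jac_im k hk0 hko hc α hα χ hχ η hη p m hp (by rw [hq, hqpm]) s t hst' hps hs4 ht
  have h0 := prim_ne_zero k hk0 hc α hα
  have hηv := eta_val k hk0 hc α hα η hη
  have hη0 : η 0 = 0 := MulChar.map_zero η
  have m0 := mem_C20 k hk0 hc α hα η hη
  have m1 := mem_C21 k hk0 hc α hα η hη
  have z0 := zero_not_mem_cyc α h0 2 0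
  have z1 := zero_not_mem_cyc α h0 2 1
  have hw0 : wU χ 0 = 0 := by simp [wU, MulChar.map_zero]
  have hEcount : ∀ d, d ≠ 0 →
      4 * (Multiset.count d (intDiff (cycClass α 4 0 ∪ cycClass α 4 1)) : ℤ)
        = q - 3 - η d * t := by
    intro d hd
    rw [count_of_w (wU χ) hw0 (wU_val k hk0 hko hc α hα χ hχ) (sum_wU k hk0 hko hc α hα χ hχ) _
      (mem_E k hk0 hko hc α hα χ hχ) d hd, wU_neg k hk0 hko hc α hα χ hχ,
      sum_wU_shift k hk0 hko hc α hα χ hχ d hd, chi_sq k hk0 hc α hα χ hχ η hη, hq,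
      Zsqrtd.im_mul, him]
    simp
    ring
  have hηs : ∑ x, η x = 0 := MulChar.sum_eq_zero_of_ne_one (eta_ne_one k hk0 hc α hα η hη)
  have hηn : ∀ d, η (-d) = η d := by
    intro d
    rw [neg_eq_neg_one_mul d, map_mul, eta_neg_one k hk0 hc α hα η hη, one_mul]
  have hC0count : ∀ d, d ≠ 0 →
      4 * (Multiset.count d (intDiff (cycClass α 2 0)) : ℤ) = q - 3 - 2 * η d := by
    intro d hd
    rw [count_of_w (fun x => η x) hη0 hηv hηs _ m0 d hd, hηn, hq,
      sum_eta_shift k hk0 hc α hα η hη d hd]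
    ring
  have hC1count : ∀ d, d ≠ 0 →
      4 * (Multiset.count d (intDiff (cycClass α 2 1)) : ℤ) = q - 3 + 2 * η d := by
    intro d hd
    rw [count_of_w (fun x => - η x) (by simp [hη0])
      (fun x hx => by rcases hηv x hx with h | h <;> simp [h])
      (by rw [Finset.sum_neg_distrib, hηs, neg_zero]) _
      (fun x => by rw [m1]; constructor <;> intro h <;> linarith) d hd, hηn, hq]
    have := sum_eta_shift k hk0 hc α hα η hη d hd
    simp only [neg_mul_neg]
    rw [this]
    ring
  have cE := card_of_w (wU χ) hw0 (wU_val k hk0 hko hc α hα χ hχ)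
    (sum_wU k hk0 hko hc α hα χ hχ) _ (mem_E k hk0 hko hc α hα χ hχ)
  have cC0 := card_of_w (fun x => η x) hη0 hηv hηs _ m0
  have cC1 := card_of_w (fun x => - η x) (by simp [hη0])
      (fun x hx => by rcases hηv x hx with h | h <;> simp [h])
      (by rw [Finset.sum_neg_distrib, hηs, neg_zero]) (cycClass α 2 1)
      (fun x => by rw [m1]; constructor <;> intro h <;> linarith)
  rw [hq] at cE cC0 cC1
  have gen : ∀ (D : Finset F) (a b : ℕ) (c : ℤ),
      (∀ d, d ≠ 0 → 4 * (Multiset.count d (intDiff D) : ℤ) = q - 3 - η d * c) →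
      4 * (a : ℤ) = q - 3 + c → 4 * (b : ℤ) = q - 3 - c →
      intDiff D = a • (cycClass α 2 1).val + b • (cycClass α 2 0).val := by
    intro D a b c h ha hb
    refine multiset_of_count D _ _ a b z1 z0 (fun x hx => ?_)
    have hx' := h x hx
    rw [m0, m1]
    rcases hηv x hx with h' | h'
    · right
      rw [h'] at hx' ⊢
      refine ⟨rfl, by norm_num, by omega⟩
    · left
      rw [h'] at hx' ⊢
      refine ⟨rfl, by norm_num, by omega⟩
  have er0 : (cycClass α 2 0).erase 0 = cycClass α 2 0 := Finset.erase_eq_of_notMem z0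
  have er1 : (cycClass α 2 1).erase 0 = cycClass α 2 1 := Finset.erase_eq_of_notMem z1
  have co0 : Gstar F \ cycClass α 2 0 = cycClass α 2 1 := by
    ext x
    unfold Gstar
    rw [Finset.mem_sdiff, m0, m1]
    simp only [Finset.mem_erase, Finset.mem_univ, and_true]
    by_cases hx : x = 0
    · subst hx; simp [hη0]
    · rcases hηv x hx with h' | h' <;> simp [h', hx]
  have co1 : Gstar F \ cycClass α 2 1 = cycClass α 2 0 := by
    ext x
    unfold Gstar
    rw [Finset.mem_sdiff, m0, m1]
    simp only [Finset.mem_erase, Finset.mem_univ, and_true]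
    by_cases hx : x = 0
    · subst hx; simp [hη0]
    · rcases hηv x hx with h' | h' <;> simp [h', hx]
  refine ⟨?_, ?_, ?_⟩
  · have k1 := hEcount 1 one_ne_zero
    have k2 := hEcount α h0
    rw [map_one] at k1
    rw [hη] at k2
    refine ⟨Multiset.count α (intDiff (cycClass α 4 0 ∪ cycClass α 4 1)),
      Multiset.count 1 (intDiff (cycClass α 4 0 ∪ cycClass α 4 1)), ?_, ?_,
      gen _ _ _ t hEcount ?_ ?_⟩
    all_goals linarith
  · intro ht2
    refine ⟨⟨hq, by omega, ?_⟩, by omega, ?_⟩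
    · rw [er1, co1]
      exact gen _ _ _ (-2) (fun d hd => by rw [hC1count d hd]; ring) (by omega) (by omega)
    · rw [er1, co1]
      exact gen _ _ _ (-2) (fun d hd => by rw [hEcount d hd, ht2]) (by omega) (by omega)
  · intro ht2
    refine ⟨⟨hq, by omega, ?_⟩, by omega, ?_⟩
    · rw [er0, co0, add_comm]
      exact gen _ _ _ 2 (fun d hd => by rw [hC0count d hd]; ring) (by omega) (by omega)
    · rw [er0, co0, add_comm]
      exact gen _ _ _ 2 (fun d hd => by rw [hEcount d hd, ht2]) (by omega) (by omega)
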